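/- arXiv:2405.14250 — 2 statements merged into one kernel-verified Lean document; each statement's English description precedes it below -/
import Mathlib

section
/- Let n : ℕ, let a, c be real numbers with 0 < c, c < 1, c ≤ a ≤ 1, and let λ : Fin n → ℝ with λ i ≥ 0 for all i. For each i set λ_t i = a·λ i + 1 − a, λ_T i = c·λ i + 1 − c, λ̃ i = λ_t i + (c/a)·(λ_t i)²·(1/λ_T i)·(1/λ_T i − 1) and λ̂ i = λ_t i / λ_T i. Then ∑_{i} (Real.sqrt (λ_t i) − Real.sqrt (λ̃ i))² ≤ ∑_{i} (Real.sqrt (λ_t i) − Real.sqrt (λ̂ i))². -/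
/-!
Eigenvalue by eigenvalue, the SDE variance is the point of the segment from the exact variance to
the ODE variance with parameter `(c / a) * λ̂`, and this parameter lies in `[0, 1]`.  Since `√` is
monotone, the SDE standard deviation then lies between the exact one and the ODE one.
-/

open Set AffineMap

section Monotone

variable {α G : Type*} [LinearOrder α] [AddCommGroup G] [LinearOrder G] [IsOrderedAddMonoid G]

theorem abs_sub_le_abs_sub_of_monotoneOn_of_mem_uIcc {f : α → G} {x y z : α}
    (hf : MonotoneOn f (uIcc x z)) (hy : y ∈ uIcc x z) : |f x - f y| ≤ |f x - f z| := by
  rw [abs_sub_comm (f x), abs_sub_comm (f x)]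
  exact abs_sub_left_of_mem_uIcc (hf.mapsTo_uIcc hy)

end Monotone

section Eigenvalues

variable {K : Type*} [Field K]

/-- The eigenvalue `λ_t` of the forward marginal covariance in a direction where the data variance
is `l`, as a function of the signal attenuation `a = e^{-2B_t}`. -/
def forwardEigenvalue (a l : K) : K := a * l + 1 - a

/-- The eigenvalue `λ̂` at attenuation `a` of the covariance of the probability flow ODE started
from the standard Gaussian at attenuation `c = e^{-2B_T}`. -/
def odeEigenvalue (a c l : K) : K := forwardEigenvalue a l / forwardEigenvalue c l

/-- The eigenvalue `λ̃` at attenuation `a` of the covariance of the backward SDE started from the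
standard Gaussian at attenuation `c = e^{-2B_T}`. -/
def sdeEigenvalue (a c l : K) : K :=
  forwardEigenvalue a l + c / a * forwardEigenvalue a l ^ 2 * (1 / forwardEigenvalue c l) *
    (1 / forwardEigenvalue c l - 1)

theorem sdeEigenvalue_eq_lineMap (a c l : K) :
    sdeEigenvalue a c l =
      lineMap (forwardEigenvalue a l) (odeEigenvalue a c l) (c / a * odeEigenvalue a c l) := by
  simp only [sdeEigenvalue, odeEigenvalue, lineMap_apply_ring']
  ring

variable [LinearOrder K] [IsStrictOrderedRing K] {a c l : K}

theorem forwardEigenvalue_nonneg (ha₀ : 0 ≤ a) (ha₁ : a ≤ 1) (hl : 0 ≤ l) :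
    0 ≤ forwardEigenvalue a l := by
  have : 0 ≤ a * l := mul_nonneg ha₀ hl
  unfold forwardEigenvalue
  linarith

theorem forwardEigenvalue_pos (ha₀ : 0 ≤ a) (ha₁ : a < 1) (hl : 0 ≤ l) :
    0 < forwardEigenvalue a l := by
  have : 0 ≤ a * l := mul_nonneg ha₀ hl
  unfold forwardEigenvalue
  linarith

theorem mul_forwardEigenvalue_le_mul_forwardEigenvalue (hca : c ≤ a) (l : K) :
    c * forwardEigenvalue a l ≤ a * forwardEigenvalue c l :=
  calc c * forwardEigenvalue a l = a * c * l - a * c + c := by unfold forwardEigenvalue; ring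
    _ ≤ a * c * l - a * c + a := by gcongr
    _ = a * forwardEigenvalue c l := by unfold forwardEigenvalue; ring

theorem div_mul_odeEigenvalue_mem_Icc (hc₀ : 0 < c) (hc₁ : c < 1) (hca : c ≤ a) (ha : a ≤ 1)
    (hl : 0 ≤ l) : c / a * odeEigenvalue a c l ∈ Icc 0 1 := by
  have ha₀ : 0 < a := hc₀.trans_le hca
  have ht : 0 ≤ forwardEigenvalue a l := forwardEigenvalue_nonneg ha₀.le ha hl
  have hT : 0 < forwardEigenvalue c l := forwardEigenvalue_pos hc₀.le hc₁ hl
  rw [odeEigenvalue, div_mul_div_comm]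
  exact ⟨by positivity,
    div_le_one_of_le₀ (mul_forwardEigenvalue_le_mul_forwardEigenvalue hca l) (by positivity)⟩

theorem sdeEigenvalue_mem_uIcc (hc₀ : 0 < c) (hc₁ : c < 1) (hca : c ≤ a) (ha : a ≤ 1)
    (hl : 0 ≤ l) :
    sdeEigenvalue a c l ∈ uIcc (forwardEigenvalue a l) (odeEigenvalue a c l) := by
  rw [sdeEigenvalue_eq_lineMap]
  exact (convex_uIcc _ _).lineMap_mem left_mem_uIcc right_mem_uIcc
    (div_mul_odeEigenvalue_mem_Icc hc₀ hc₁ hca ha hl)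

end Eigenvalues

/-- Proposition 4: `W₂(p̃_t, p_t)² ≤ W₂(p̂_t, p_t)²`, expressed via equation (10) as an
inequality between sums of squared square-root eigenvalue gaps — for Gaussian data with
known score, the SDE sampler is a better sampler than the ODE sampler. -/
theorem sde_better_than_ode_wasserstein
    (n : ℕ) (a c : ℝ) (hc : 0 < c) (hc1 : c < 1) (hca : c ≤ a) (ha : a ≤ 1)
    (lam : Fin n → ℝ) (hlam : ∀ i, 0 ≤ lam i)
    (lamt lamT lamtld lamhat : Fin n → ℝ)
    (hlamt : ∀ i, lamt i = a * lam i + 1 - a)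
    (hlamT : ∀ i, lamT i = c * lam i + 1 - c)
    (hlamtld : ∀ i, lamtld i
      = lamt i + (c / a) * (lamt i) ^ 2 * (1 / lamT i) * (1 / lamT i - 1))
    (hlamhat : ∀ i, lamhat i = lamt i / lamT i) :
    ∑ i, (Real.sqrt (lamt i) - Real.sqrt (lamtld i)) ^ 2
      ≤ ∑ i, (Real.sqrt (lamt i) - Real.sqrt (lamhat i)) ^ 2 := by
  obtain rfl : lamt = fun i ↦ forwardEigenvalue a (lam i) := funext hlamt
  obtain rfl : lamT = fun i ↦ forwardEigenvalue c (lam i) := funext hlamT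
  obtain rfl : lamtld = fun i ↦ sdeEigenvalue a c (lam i) := funext hlamtld
  obtain rfl : lamhat = fun i ↦ odeEigenvalue a c (lam i) := funext hlamhat
  refine Finset.sum_le_sum fun i _ ↦ sq_le_sq.mpr ?_
  exact abs_sub_le_abs_sub_of_monotoneOn_of_mem_uIcc (Real.sqrt_monotone.monotoneOn _)
    (sdeEigenvalue_mem_uIcc hc hc1 hca ha (hlam i))
end

section
/- Let d : ℕ, let Σ be a real symmetric positive semidefinite d×d matrix, let β : ℝ → ℝ be continuous with β s > 0 for all s, set B t = ∫_0^t β s ds and Σ_t = exp(−2·B t)·Σ + (1 − exp(−2·B t))·I. Fix reals Δ > 0, b > 0 and s > 0, and set E = I + (Δ·b) • (I − 2 • (Σ_s)⁻¹). If v ∈ ℝ^d and λ ≥ 0 satisfy Σ.mulVec v = λ • v, and M is a d×d real matrix with M.mulVec v = μ • v, then (E * M * Eᵀ + (2·Δ·b) • I).mulVec v = ((1 + Δ·b·(1 − 2/λ_s))²·μ + 2·Δ·b) • v, where λ_s = exp(−2·B s)·λ + 1 − exp(−2·B s). -/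
open Matrix

/-!
The matrices `Σ_s`, `Σ_s⁻¹` and `E` lie in the algebra generated by `S`, so `v` is an eigenvector of
each of them, and `E` is symmetric. Hence `E * M * Eᵀ` multiplies `v` by `μ` times the square of the
eigenvalue of `E`. The inverse is a genuine one because `B s > 0` makes `Σ_s` a convex combination
of `S` and the identity with positive weight on the identity.
-/

section Eigenvectors

variable {n R K : Type*} [Fintype n]

theorem mul_mulVec_eq_smul [CommSemiring R] {A C : Matrix n n R} {v : n → R} {a c : R}
    (hA : A *ᵥ v = a • v) (hC : C *ᵥ v = c • v) : (A * C) *ᵥ v = (a * c) • v := by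
  rw [← mulVec_mulVec, hC, mulVec_smul, hA, smul_smul, mul_comm]

variable [DecidableEq n]

theorem smul_add_smul_one_mulVec_eq_smul [CommSemiring R] {A : Matrix n n R} {v : n → R} {a : R}
    (hA : A *ᵥ v = a • v) (p q : R) :
    (p • A + q • (1 : Matrix n n R)) *ᵥ v = (p * a + q) • v := by
  rw [add_mulVec, smul_mulVec, smul_mulVec, one_mulVec, hA, smul_smul, add_smul]

theorem inv_mulVec_eq_inv_smul [Field K] {A : Matrix n n K} (hdet : IsUnit A.det)
    {v : n → K} {a : K} (hA : A *ᵥ v = a • v) : A⁻¹ *ᵥ v = a⁻¹ • v := by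
  have hv : v = a • A⁻¹ *ᵥ v := by
    rw [← mulVec_smul, ← hA, mulVec_mulVec, nonsing_inv_mul A hdet, one_mulVec]
  rcases eq_or_ne a 0 with rfl | ha
  · rw [zero_smul] at hv
    rw [hv, mulVec_zero, smul_zero]
  · exact ((inv_smul_eq_iff₀ ha).mpr hv).symm

end Eigenvectors

section EulerMaruyamaStep

variable {n R K : Type*} [DecidableEq n] [CommRing R] [Field K]

/-- The covariance `p Σ + (1 - p) I` of the forward process started from data covariance `Σ = S`;
the time `t` enters only through `p = exp (-2 B t)`. -/
def forwardCovariance (S : Matrix n n R) (p : R) : Matrix n n R :=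
  p • S + (1 - p) • 1

theorem isSymm_forwardCovariance {S : Matrix n n R} (hS : S.IsSymm) (p : R) :
    (forwardCovariance S p).IsSymm :=
  (hS.smul p).add (isSymm_one.smul (1 - p))

variable [Fintype n]

theorem forwardCovariance_mulVec_eq_smul {S : Matrix n n R} {v : n → R} {a : R}
    (hS : S *ᵥ v = a • v) (p : R) : forwardCovariance S p *ᵥ v = (p * a + 1 - p) • v := by
  rw [forwardCovariance, smul_add_smul_one_mulVec_eq_smul hS, add_sub_assoc]

/-- The matrix `I + τ (I - 2 A⁻¹)` of one Euler–Maruyama step of the backward SDE, where `A` is the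
forward covariance at the remaining time and `τ = Δ b`. Here `A⁻¹ = 0` unless `A.det` is a unit. -/
noncomputable def backwardStep (A : Matrix n n R) (τ : R) : Matrix n n R :=
  1 + τ • (1 - (2 : R) • A⁻¹)

theorem isSymm_backwardStep {A : Matrix n n R} (hA : A.IsSymm) (τ : R) :
    (backwardStep A τ).IsSymm :=
  isSymm_one.add ((isSymm_one.sub (hA.inv.smul 2)).smul τ)

theorem backwardStep_mulVec_eq_smul {A : Matrix n n K} (hdet : IsUnit A.det) {v : n → K} {a : K}
    (hA : A *ᵥ v = a • v) (τ : K) : backwardStep A τ *ᵥ v = (1 + τ * (1 - 2 / a)) • v := by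
  have h_affine : backwardStep A τ = (-(2 * τ)) • A⁻¹ + (1 + τ) • (1 : Matrix n n K) := by
    rw [backwardStep]
    module
  rw [h_affine, smul_add_smul_one_mulVec_eq_smul (inv_mulVec_eq_inv_smul hdet hA)]
  congr 1
  ring

end EulerMaruyamaStep

section Invertibility

variable {n : Type*} [DecidableEq n] {S : Matrix n n ℝ}

theorem posDef_forwardCovariance (hS : S.PosSemidef) {p : ℝ} (hp₀ : 0 ≤ p) (hp₁ : p < 1) :
    (forwardCovariance S p).PosDef :=
  PosDef.posSemidef_add (hS.smul hp₀) (PosDef.one.smul (sub_pos.mpr hp₁))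

theorem isUnit_det_forwardCovariance_exp_integral [Fintype n] (hS : S.PosSemidef)
    {β : ℝ → ℝ} {s : ℝ} (hβ : IntervalIntegrable β MeasureTheory.volume 0 s)
    (hβpos : ∀ t ∈ Set.Ioo 0 s, 0 < β t) (hs : 0 < s) :
    IsUnit (forwardCovariance S (Real.exp (-2 * ∫ t in (0 : ℝ)..s, β t))).det := by
  have h_integral_pos : 0 < ∫ t in (0 : ℝ)..s, β t :=
    intervalIntegral.intervalIntegral_pos_of_pos_on hβ hβpos hs
  have h_exp_lt_one : Real.exp (-2 * ∫ t in (0 : ℝ)..s, β t) < 1 :=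
    Real.exp_lt_one_iff.mpr (by linarith)
  exact (posDef_forwardCovariance hS (Real.exp_pos _).le h_exp_lt_one).det_pos.ne'.isUnit

end Invertibility

theorem euler_maruyama_eigenvalue_recursion_general {n K : Type*} [Fintype n] [DecidableEq n]
    [Field K] {S A E M : Matrix n n K} {p Δ b : K}
    (hS : S.IsSymm) (hA : A = forwardCovariance S p) (hdet : IsUnit A.det)
    (hE : E = backwardStep A (Δ * b))
    {v : n → K} {lam μ lams : K} (hv : S *ᵥ v = lam • v) (hM : M *ᵥ v = μ • v)
    (hlams : lams = p * lam + 1 - p) :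
    (E * M * Eᵀ + (2 * Δ * b) • (1 : Matrix n n K)) *ᵥ v
      = ((1 + Δ * b * (1 - 2 / lams)) ^ 2 * μ + 2 * Δ * b) • v := by
  have hA_symm : A.IsSymm := hA ▸ isSymm_forwardCovariance hS p
  have hAv : A *ᵥ v = lams • v := hA ▸ hlams ▸ forwardCovariance_mulVec_eq_smul hv p
  have hE_symm : Eᵀ = E := hE ▸ isSymm_backwardStep hA_symm (Δ * b)
  have hEv : E *ᵥ v = (1 + Δ * b * (1 - 2 / lams)) • v :=
    hE ▸ backwardStep_mulVec_eq_smul hdet hAv (Δ * b)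
  have hEMEv := mul_mulVec_eq_smul (mul_mulVec_eq_smul hEv hM) hEv
  rw [hE_symm, ← one_smul K (E * M * E), smul_add_smul_one_mulVec_eq_smul hEMEv]
  congr 1
  ring

/-- Equation (18): eigenvalue recursion of one Euler–Maruyama step of the backward SDE.
One step maps a Gaussian with covariance `M` to one with covariance `E M Eᵀ + 2Δb I`,
where `E = I + Δb (I - 2 Σ_s⁻¹)`; in an eigenbasis of `Σ` the eigenvalue `μ` of `M` is
mapped to `(1 + Δb (1 - 2/λ_s))² μ + 2Δb`. -/
theorem euler_maruyama_eigenvalue_recursion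
    (d : ℕ) (S : Matrix (Fin d) (Fin d) ℝ)
    (hS_sym : S.IsSymm) (hS_psd : S.PosSemidef)
    (β : ℝ → ℝ) (hβ : Continuous β) (hβpos : ∀ s, 0 < β s)
    (B : ℝ → ℝ) (hB : ∀ t, B t = ∫ s in (0:ℝ)..t, β s)
    (St : ℝ → Matrix (Fin d) (Fin d) ℝ)
    (hSt : ∀ t, St t = Real.exp (-2 * B t) • S
      + (1 - Real.exp (-2 * B t)) • (1 : Matrix (Fin d) (Fin d) ℝ))
    (Δ b s : ℝ) (hΔ : 0 < Δ) (hb : 0 < b) (hs : 0 < s)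
    (E : Matrix (Fin d) (Fin d) ℝ)
    (hE : E = 1 + (Δ * b) • ((1 : Matrix (Fin d) (Fin d) ℝ) - (2 : ℝ) • (St s)⁻¹))
    (v : Fin d → ℝ) (lam : ℝ) (hlam : 0 ≤ lam) (hv : S.mulVec v = lam • v)
    (M : Matrix (Fin d) (Fin d) ℝ) (μ : ℝ) (hM : M.mulVec v = μ • v)
    (lams : ℝ)
    (hlams : lams = Real.exp (-2 * B s) * lam + 1 - Real.exp (-2 * B s)) :
    (E * M * Eᵀ + (2 * Δ * b) • (1 : Matrix (Fin d) (Fin d) ℝ)).mulVec v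
      = ((1 + Δ * b * (1 - 2 / lams)) ^ 2 * μ + 2 * Δ * b) • v := by
  have hdet : IsUnit (St s).det := hSt s ▸ hB s ▸ isUnit_det_forwardCovariance_exp_integral hS_psd
    (hβ.intervalIntegrable 0 s) (fun t _ => hβpos t) hs
  exact euler_maruyama_eigenvalue_recursion_general hS_sym (hSt s) hdet hE hv hM hlams
end
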